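/- (Lemma 4.4: tuning of the penalty parameter.) Let J : ℝⁿ → ℝ, g : ℝⁿ → ℝᵐ, h : ℝⁿ → ℝᵖ be differentiable at z ∈ ℝⁿ with gradients ∇J(z), ∇g_j(z), ∇h_i(z), and let α > 0. Let d_z ∈ ℝⁿ, s, d_s, λ, λ_G ∈ ℝᵐ, ν, ν_G ∈ ℝᵖ, with s ≥ 0 and λ_G ≥ 0, and set d_λ := λ_G − λ, d_ν := ν_G − ν. Assume: (a) (1/α) d_z + ∇J(z) + Σ_{j=1}^m λ_{G,j} ∇g_j(z) + Σ_{i=1}^p ν_{G,i} ∇h_i(z) = 0; (b) λ_{G,j}(g_j(z) + ⟨∇g_j(z), d_z⟩) = 0 for all j; (c) ⟨∇g_j(z), d_z⟩ + d_{s,j} = −(g_j(z) + s_j) for all j; (d) ⟨∇h_i(z), d_z⟩ = −h_i(z) for all i. For each ρ ≥ 0 define φ_ρ(t) := L_aug^ρ(z + t d_z, λ + t d_λ, ν + t d_ν, s + t d_s). Then there exists ρ̂ ≥ 0 such that for every ρ ≥ ρ̂, φ_ρ is differentiable at 0 and φ_ρ'(0) ≤ −(1/(2α))‖d_z‖². 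-/

import Mathlib

open scoped RealInnerProductSpace

/-!
Along the search direction the linearized equations give the residuals `g + s` and `h` the
derivatives `-(g + s)` and `-h`, so the penalty terms contribute `-ρ (‖g + s‖² + ‖h‖²)` to the
slope of `L_aug^ρ`. The remaining terms exceed the slope of the Lagrangian with multipliers
`(λ_G, ν_G)` by `2 ⟪g + s, λ_G - λ⟫ + 2 ⟪h, ν_G - ν⟫ + ⟪d_s, λ_G⟫`. The last summand is nonpositive
by complementarity, and by Cauchy–Schwarz the penalty absorbs the other two as soon as
`ρ ≥ 2 ‖λ_G - λ‖ / ‖g + s‖` and `ρ ≥ 2 ‖ν_G - ν‖ / ‖h‖`. Stationarity identifies the Lagrangian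
slope as `-‖d_z‖² / α`.
-/

theorem hasDerivAt_add_smul {V : Type*} [NormedAddCommGroup V] [NormedSpace ℝ V] (x v : V)
    (t : ℝ) : HasDerivAt (fun t : ℝ => x + t • v) v t := by
  simpa using ((hasDerivAt_id t).smul_const v).const_add x

section MeritSlope

variable {E F G : Type*} [AddCommGroup E] [Module ℝ E]
  [NormedAddCommGroup F] [InnerProductSpace ℝ F] [NormedAddCommGroup G] [InnerProductSpace ℝ G]

/-- The augmented Lagrangian `L_aug^ρ` of the problem of minimizing `J` subject to `g ≤ 0` and
`h = 0`. Its four arguments `(z, λ, ν, s)` form a single point of a product space, so that the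
derivative `φ_ρ'(0)` of the merit function is a line derivative. -/
noncomputable def augLagrangian (J : E → ℝ) (g : E → F) (h : E → G) (ρ : ℝ) :
    E × F × G × F → ℝ
  | (z, lam, nu, s) =>
    J z + ⟪g z + s, lam⟫ + ⟪h z, nu⟫ + (ρ / 2) * ‖g z + s‖ ^ 2 + (ρ / 2) * ‖h z‖ ^ 2

variable {J : E → ℝ} {g : E → F} {h : E → G} {z dz : E} {J' : ℝ} {g' : F} {h' : G}
  {s ds lam lamG dlam : F} {nu nuG dnu : G}

theorem hasLineDerivAt_augLagrangian (ρ : ℝ) (hJ : HasLineDerivAt ℝ J J' z dz)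
    (hg : HasLineDerivAt ℝ g g' z dz) (hh : HasLineDerivAt ℝ h h' z dz) :
    HasLineDerivAt ℝ (augLagrangian J g h ρ)
      (J' + (⟪g z + s, dlam⟫ + ⟪g' + ds, lam⟫) + (⟪h z, dnu⟫ + ⟪h', nu⟫)
        + ρ * ⟪g z + s, g' + ds⟫ + ρ * ⟪h z, h'⟫)
      (z, lam, nu, s) (dz, dlam, dnu, ds) := by
  have hresidual : HasDerivAt (fun t : ℝ => g (z + t • dz) + (s + t • ds)) (g' + ds) 0 :=
    HasDerivAt.add hg (hasDerivAt_add_smul s ds 0)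
  have hsum := (((HasDerivAt.add hJ (hresidual.inner ℝ (hasDerivAt_add_smul lam dlam 0))).add
    (HasDerivAt.inner ℝ hh (hasDerivAt_add_smul nu dnu 0))).add
      (hresidual.norm_sq.const_mul (ρ / 2))).add ((HasDerivAt.norm_sq hh).const_mul (ρ / 2))
  refine HasDerivAt.congr_deriv hsum ?_
  simp only [zero_smul, add_zero]
  ring

/-- At `r = 0` the quotient is the junk value `0`, and both sides of the inequality vanish. -/
theorem inner_le_mul_norm_sq_of_div_le {r d : F} {ρ : ℝ} (hρ : ‖d‖ / ‖r‖ ≤ ρ) :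
    ⟪r, d⟫ ≤ ρ * ‖r‖ ^ 2 := by
  rcases eq_or_ne r 0 with rfl | hr
  · simp
  · calc ⟪r, d⟫ ≤ ‖r‖ * ‖d‖ := real_inner_le_norm r d
      _ = ‖d‖ / ‖r‖ * ‖r‖ ^ 2 := by field_simp
      _ ≤ ρ * ‖r‖ ^ 2 := by gcongr

theorem lineDeriv_augLagrangian_le {ρ : ℝ} (hJ : HasLineDerivAt ℝ J J' z dz)
    (hg : HasLineDerivAt ℝ g g' z dz) (hh : HasLineDerivAt ℝ h h' z dz)
    (hslack : g' + ds = -(g z + s)) (hfeas : h' = -h z) (hcompl : ⟪ds, lamG⟫ ≤ 0)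
    (hρg : ‖(2 : ℝ) • (lamG - lam)‖ / ‖g z + s‖ ≤ ρ)
    (hρh : ‖(2 : ℝ) • (nuG - nu)‖ / ‖h z‖ ≤ ρ) :
    lineDeriv ℝ (augLagrangian J g h ρ) (z, lam, nu, s) (dz, lamG - lam, nuG - nu, ds) ≤
      J' + ⟪g', lamG⟫ + ⟪h', nuG⟫ := by
  have hg' : g' = -(g z + s) - ds := eq_sub_of_add_eq hslack
  have hpenalty_g := inner_le_mul_norm_sq_of_div_le hρg
  have hpenalty_h := inner_le_mul_norm_sq_of_div_le hρh
  rw [(hasLineDerivAt_augLagrangian ρ hJ hg hh).lineDeriv, hslack, hfeas, hg']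
  simp only [inner_sub_left, inner_sub_right, inner_neg_left, inner_neg_right,
    real_inner_smul_right, real_inner_self_eq_norm_sq] at hpenalty_g hpenalty_h ⊢
  linarith

/-- The condition `⟪d_s, λ_G⟫ ≤ 0` encodes complementarity, which gives
`⟪d_s, λ_G⟫ = -⟪s, λ_G⟫`, and the signs of `s` and `λ_G`. The bound is the slope along `d_z` of the
Lagrangian with multipliers `(λ_G, ν_G)`. -/
theorem stmt_3_general (hJ : HasLineDerivAt ℝ J J' z dz)
    (hg : HasLineDerivAt ℝ g g' z dz) (hh : HasLineDerivAt ℝ h h' z dz)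
    (hslack : g' + ds = -(g z + s)) (hfeas : h' = -h z) (hcompl : ⟪ds, lamG⟫ ≤ 0) :
    ∃ ρhat : ℝ, 0 ≤ ρhat ∧ ∀ ρ : ℝ, ρhat ≤ ρ →
      LineDifferentiableAt ℝ (augLagrangian J g h ρ)
        (z, lam, nu, s) (dz, lamG - lam, nuG - nu, ds) ∧
      lineDeriv ℝ (augLagrangian J g h ρ) (z, lam, nu, s) (dz, lamG - lam, nuG - nu, ds) ≤
        J' + ⟪g', lamG⟫ + ⟪h', nuG⟫ :=
  ⟨max (‖(2 : ℝ) • (lamG - lam)‖ / ‖g z + s‖) (‖(2 : ℝ) • (nuG - nu)‖ / ‖h z‖),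
    le_max_of_le_left (by positivity), fun ρ hρ =>
      ⟨(hasLineDerivAt_augLagrangian ρ hJ hg hh).lineDifferentiableAt,
        lineDeriv_augLagrangian_le hJ hg hh hslack hfeas hcompl
          (le_of_max_le_left hρ) (le_of_max_le_right hρ)⟩⟩

end MeritSlope

section Coordinates

variable {E ι κ : Type*} [NormedAddCommGroup E] [InnerProductSpace ℝ E] [Fintype ι] [Fintype κ]

theorem hasLineDerivAt_of_hasGradientAt [CompleteSpace E] {f : E → ℝ} {a x : E}
    (hf : HasGradientAt f a x) (v : E) : HasLineDerivAt ℝ f ⟪a, v⟫ x v := by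
  simpa using hf.hasFDerivAt.hasLineDerivAt v

theorem hasLineDerivAt_euclidean {V : Type*} [AddCommGroup V] [Module ℝ V]
    {f : V → EuclideanSpace ℝ ι} {f' : EuclideanSpace ℝ ι} {x v : V}
    (hf : ∀ i, HasLineDerivAt ℝ (fun y => f y i) (f' i) x v) : HasLineDerivAt ℝ f f' x v :=
  HasFDerivAt.comp_hasDerivAt (f := fun t : ℝ => (f (x + t • v)).ofLp) 0
    (PiLp.hasFDerivAt_toLp (𝕜 := ℝ) 2 _) (hasDerivAt_pi.2 hf)

theorem hasLineDerivAt_of_forall_hasGradientAt [CompleteSpace E] {f : E → EuclideanSpace ℝ ι}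
    {b : ι → E} {x : E} (hf : ∀ i, HasGradientAt (fun y => f y i) (b i) x) (v : E) :
    HasLineDerivAt ℝ f (WithLp.toLp 2 fun i => ⟪b i, v⟫) x v :=
  hasLineDerivAt_euclidean fun i => hasLineDerivAt_of_hasGradientAt (hf i) v

theorem inner_toLp_inner (b : ι → E) (v : E) (c : EuclideanSpace ℝ ι) :
    ⟪WithLp.toLp 2 fun i => ⟪b i, v⟫, c⟫ = ⟪∑ i, c i • b i, v⟫ := by
  simp [PiLp.inner_apply, sum_inner, real_inner_smul_left]

theorem lagrangian_slope_eq_of_stationary {c : ℝ} {a dz : E} {b : ι → E} {b' : κ → E}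
    {lam : EuclideanSpace ℝ ι} {nu : EuclideanSpace ℝ κ}
    (hstat : c • dz + a + (∑ j, lam j • b j) + (∑ i, nu i • b' i) = 0) :
    ⟪a, dz⟫ + ⟪WithLp.toLp 2 fun j => ⟪b j, dz⟫, lam⟫ + ⟪WithLp.toLp 2 fun i => ⟪b' i, dz⟫, nu⟫
      = -(c * ‖dz‖ ^ 2) := by
  have htested := congrArg (fun v => ⟪v, dz⟫) hstat
  simp only [inner_add_left, real_inner_smul_left, real_inner_self_eq_norm_sq,
    inner_zero_left] at htested
  rw [inner_toLp_inner, inner_toLp_inner]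
  linarith

theorem inner_slack_direction_nonpos {c c' : ι → ℝ} {s ds lam : EuclideanSpace ℝ ι}
    (hs : ∀ j, 0 ≤ s j) (hlam : ∀ j, 0 ≤ lam j) (hcompl : ∀ j, lam j * (c j + c' j) = 0)
    (hslack : ∀ j, c' j + ds j = -(c j + s j)) : ⟪ds, lam⟫ ≤ 0 := by
  rw [PiLp.inner_apply]
  refine Finset.sum_nonpos fun j _ => ?_
  calc ⟪ds j, lam j⟫ = lam j * ds j := rfl
    _ = -(lam j * s j) := by linear_combination lam j * hslack j - hcompl j
    _ ≤ 0 := neg_nonpos.2 (mul_nonneg (hlam j) (hs j))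

end Coordinates

/-- Lemma 4.4: tuning of the penalty parameter.  Under the KKT conditions of the
projection subproblem (a)–(b) and the slack relations (c)–(d), there exists `ρ̂ ≥ 0`
such that for every penalty `ρ ≥ ρ̂` the merit function
`φ_ρ(t) = L_aug^ρ(z + t d_z, λ + t d_λ, ν + t d_ν, s + t d_s)` is differentiable at `0`
with `φ_ρ'(0) ≤ −‖d_z‖²/(2α)`. -/
theorem stmt_3 {n m p : ℕ}
    (J : EuclideanSpace ℝ (Fin n) → ℝ)
    (g : EuclideanSpace ℝ (Fin n) → EuclideanSpace ℝ (Fin m))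
    (h : EuclideanSpace ℝ (Fin n) → EuclideanSpace ℝ (Fin p))
    (z : EuclideanSpace ℝ (Fin n))
    (aJ : EuclideanSpace ℝ (Fin n)) (hJ : HasGradientAt J aJ z)
    (bg : Fin m → EuclideanSpace ℝ (Fin n))
    (hg : ∀ j, HasGradientAt (fun w => g w j) (bg j) z)
    (ch : Fin p → EuclideanSpace ℝ (Fin n))
    (hh : ∀ i, HasGradientAt (fun w => h w i) (ch i) z)
    (α : ℝ) (hα : 0 < α)
    (dz : EuclideanSpace ℝ (Fin n))
    (s ds lam lamG : EuclideanSpace ℝ (Fin m))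
    (nu nuG : EuclideanSpace ℝ (Fin p))
    (hs : ∀ j, 0 ≤ s j) (hlamG : ∀ j, 0 ≤ lamG j)
    (dlam : EuclideanSpace ℝ (Fin m)) (hdlam : dlam = lamG - lam)
    (dnu : EuclideanSpace ℝ (Fin p)) (hdnu : dnu = nuG - nu)
    -- (a) stationarity of the projection subproblem
    (ha : (1 / α) • dz + aJ + (∑ j, lamG j • bg j) + (∑ i, nuG i • ch i) = 0)
    -- (b) complementarity for the linearized inequality constraints
    (hb : ∀ j, lamG j * (g z j + ⟪bg j, dz⟫) = 0)
    -- (c) slack direction relation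
    (hc : ∀ j, ⟪bg j, dz⟫ + ds j = -(g z j + s j))
    -- (d) linearized equality constraints
    (hd : ∀ i, ⟪ch i, dz⟫ = -(h z i)) :
    ∃ ρhat : ℝ, 0 ≤ ρhat ∧ ∀ ρ : ℝ, ρhat ≤ ρ →
      DifferentiableAt ℝ
        (fun t : ℝ =>
          J (z + t • dz) + ⟪g (z + t • dz) + (s + t • ds), lam + t • dlam⟫ +
            ⟪h (z + t • dz), nu + t • dnu⟫ +
            (ρ / 2) * ‖g (z + t • dz) + (s + t • ds)‖ ^ 2 +
            (ρ / 2) * ‖h (z + t • dz)‖ ^ 2) 0 ∧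
      deriv
        (fun t : ℝ =>
          J (z + t • dz) + ⟪g (z + t • dz) + (s + t • ds), lam + t • dlam⟫ +
            ⟪h (z + t • dz), nu + t • dnu⟫ +
            (ρ / 2) * ‖g (z + t • dz) + (s + t • ds)‖ ^ 2 +
            (ρ / 2) * ‖h (z + t • dz)‖ ^ 2) 0 ≤ -(1 / (2 * α)) * ‖dz‖ ^ 2 := by
  subst hdlam hdnu
  have hcompl : ⟪ds, lamG⟫ ≤ 0 := inner_slack_direction_nonpos hs hlamG hb hc
  have hslope := lagrangian_slope_eq_of_stationary ha
  obtain ⟨ρhat, hρhat, hmerit⟩ := stmt_3_general (lam := lam) (nu := nu)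
    (hasLineDerivAt_of_hasGradientAt hJ dz)
    (hasLineDerivAt_of_forall_hasGradientAt hg dz) (hasLineDerivAt_of_forall_hasGradientAt hh dz)
    (PiLp.ext hc) (PiLp.ext hd) hcompl
  refine ⟨ρhat, hρhat, fun ρ hρ => (hmerit ρ hρ).imp_right fun hle => hle.trans ?_⟩
  calc _ = -(1 / α * ‖dz‖ ^ 2) := hslope
    _ ≤ -(1 / (2 * α)) * ‖dz‖ ^ 2 := by
      rw [neg_mul]
      gcongr
      linarith
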